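/- arXiv:1208.0446 — 2 statements merged into one kernel-verified Lean document; each statement's English description precedes it below -/
import Mathlib

section
/- Let A_i (i = 1,…,n) be finite nonempty sets, and for each a ∈ A_i let f^a_i : ℝⁿ → ℝ be polyhedral, order-preserving, additively homogeneous and convex; define f_i(x) = min_{a∈A_i} f^a_i(x) and, for strategies σ, σ' ∈ ∏_i A_i, let f^{(σ)}_i = f^{σ(i)}_i and f^{(σ')}_i = f^{σ'(i)}_i. Suppose t ↦ tη + v is an invariant half-line of f^{(σ)} and that f^{(σ')}(tη + v) = f(tη + v) for all sufficiently large t. Then the cycle times of f^{(σ)} and f^{(σ')} exist and satisfy χ(f^{(σ')}) ≤ χ(f^{(σ)}) = η. -/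
open Filter Topology

/-- A function `g : ℝⁿ → ℝ` is polyhedral: there is a covering of `ℝⁿ` by finitely many
convex polyhedra (finite intersections of half-spaces) on each of which `g` is affine. -/
def IsPolyhedralFun {n : ℕ} (g : (Fin n → ℝ) → ℝ) : Prop :=
  ∃ (m : ℕ) (C : Fin m → Set (Fin n → ℝ)),
    (⋃ k, C k) = Set.univ ∧
    ∀ k : Fin m,
      (∃ (p : ℕ) (a : Fin p → Fin n → ℝ) (b : Fin p → ℝ),
        C k = {x | ∀ l, ∑ j, a l j * x j ≤ b l}) ∧
      ∃ (A : Fin n → ℝ) (c : ℝ), ∀ x ∈ C k, g x = (∑ j, A j * x j) + c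


lemma aux_sign (p : Polynomial ℝ) :
    (∀ᶠ s in 𝓝[>] (0:ℝ), p.eval s ≤ 0) ∨ (∀ᶠ s in 𝓝[>] (0:ℝ), ¬ p.eval s ≤ 0) := by
  by_cases hp : p = 0
  · left; simp [hp]
  obtain ⟨q, hq, hnd⟩ := Polynomial.exists_eq_pow_rootMultiplicity_mul_and_not_dvd p hp 0
  generalize p.rootMultiplicity 0 = m at hq
  rw [Polynomial.dvd_iff_isRoot, Polynomial.IsRoot.def] at hnd
  have hc : Tendsto (fun s => q.eval s) (𝓝[>] (0:ℝ)) (𝓝 (q.eval 0)) :=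
    (q.continuous.tendsto 0).mono_left nhdsWithin_le_nhds
  have hpos : ∀ᶠ s in 𝓝[>] (0:ℝ), 0 < s := eventually_mem_nhdsWithin
  rcases lt_or_gt_of_ne hnd with h | h
  · left
    filter_upwards [hpos, hc.eventually (gt_mem_nhds h)] with s hs h1
    rw [hq]
    simp only [Polynomial.eval_mul, Polynomial.eval_pow, Polynomial.eval_sub, Polynomial.eval_X,
      Polynomial.eval_C, sub_zero]
    exact mul_nonpos_of_nonneg_of_nonpos (by positivity) h1.le
  · right
    filter_upwards [hpos, hc.eventually (lt_mem_nhds h)] with s hs h1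
    rw [hq]
    simp only [Polynomial.eval_mul, Polynomial.eval_pow, Polynomial.eval_sub, Polynomial.eval_X,
      Polynomial.eval_C, sub_zero, not_le]
    positivity

lemma aux_ne (p : Polynomial ℝ) (hp : p ≠ 0) : ∀ᶠ s in 𝓝[>] (0:ℝ), p.eval s ≠ 0 := by
  have h : ∀ᶠ s in 𝓝[≠] (0:ℝ), p.eval s ≠ 0 := by
    have hf : ((p.roots.toFinset : Set ℝ) \ {0}).Finite := (Finset.finite_toSet _).sdiff
    have : (((p.roots.toFinset : Set ℝ) \ {0})ᶜ) ∈ 𝓝 (0:ℝ) :=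
      hf.isClosed.isOpen_compl.mem_nhds (by simp)
    filter_upwards [nhdsWithin_le_nhds this, self_mem_nhdsWithin] with s hs h0 h1
    apply hs
    simp [hp, h1] 
    exact h0
  exact h.filter_mono (nhdsWithin_mono _ (fun x hx => ne_of_gt hx))

lemma aux_cd (p : Polynomial ℝ) : ContDiffAt ℝ 1 (fun s => p.eval s) 0 := by
  have := (p.contDiff_aeval (𝕜 := ℝ) (n := 1)).contDiffAt (x := (0 : ℝ))
  simpa [Polynomial.coe_aeval_eq_eval] using this

lemma aux_smooth (w : ℝ → ℝ) (K : ℝ) (hw : ∀ᶠ s in 𝓝[>] (0:ℝ), |w s| ≤ K) :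
    ∀ (d : ℕ) (q p : Polynomial ℝ), q.natDegree ≤ d → q ≠ 0 →
      (∀ᶠ s in 𝓝[>] (0:ℝ), q.eval s * w s = p.eval s) →
      ∃ W : ℝ → ℝ, ContDiffAt ℝ 1 W 0 ∧ w =ᶠ[𝓝[>] (0:ℝ)] W := by
  intro d
  induction d with
  | zero =>
    intro q p hd hq h
    refine ⟨fun s => p.eval s / q.eval s, ?_, ?_⟩
    · apply ContDiffAt.div (aux_cd p) (aux_cd q)
      rw [Polynomial.eq_C_of_natDegree_le_zero hd] at hq ⊢
      simpa using hq
    · filter_upwards [h, aux_ne q hq] with s h1 h2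
      rw [eq_div_iff h2, ← h1, mul_comm]
  | succ d ih =>
    intro q p hd hq h
    by_cases h0 : q.eval 0 = 0
    · have hp0 : p.eval 0 = 0 := by
        have hc : Tendsto (fun s => p.eval s) (𝓝[>] (0:ℝ)) (𝓝 (p.eval 0)) :=
          (p.continuous.tendsto 0).mono_left nhdsWithin_le_nhds
        have hcq : Tendsto (fun s => q.eval s) (𝓝[>] (0:ℝ)) (𝓝 0) := by
          have := (q.continuous.tendsto 0).mono_left (nhdsWithin_le_nhds (s := Set.Ioi 0))
          rwa [h0] at this
        have h2 : Tendsto (fun s => p.eval s) (𝓝[>] (0:ℝ)) (𝓝 0) := by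
          have h3 : Tendsto (fun s => |q.eval s| * K) (𝓝[>] (0:ℝ)) (𝓝 0) := by
            simpa using hcq.abs.mul_const K
          refine squeeze_zero_norm' ?_ h3
          filter_upwards [h, hw] with s h1 h2
          rw [← h1, Real.norm_eq_abs, abs_mul]
          gcongr
        exact tendsto_nhds_unique hc h2
      have hX : ∀ r : Polynomial ℝ, r.eval 0 = 0 → Polynomial.X * r.divX = r := by
        intro r hr
        have := r.X_mul_divX_add
        rwa [Polynomial.coeff_zero_eq_eval_zero, hr, Polynomial.C_0, add_zero] at this
      have hqX := hX q h0
      have hpX := hX p hp0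
      apply ih q.divX p.divX
      · rw [Polynomial.natDegree_divX_eq_natDegree_tsub_one]; omega
      · intro hz; rw [hz, mul_zero] at hqX; exact hq hqX.symm
      · filter_upwards [h, self_mem_nhdsWithin] with s h1 hs
        rw [← hqX, ← hpX] at h1
        simp only [Polynomial.eval_mul, Polynomial.eval_X] at h1
        have hs' : s ≠ 0 := ne_of_gt hs
        apply mul_left_cancel₀ hs'
        linarith
    · refine ⟨fun s => p.eval s / q.eval s, ?_, ?_⟩
      · exact ContDiffAt.div (aux_cd p) (aux_cd q) h0
      · filter_upwards [h, aux_ne q hq] with s h1 h2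
        rw [eq_div_iff h2, ← h1, mul_comm]

lemma aux_fix {n : ℕ} (g : (Fin n → ℝ) → (Fin n → ℝ)) (hg : LipschitzWith 1 g) :
    ∃ y : ℝ → (Fin n → ℝ), ∀ s, 0 < s → s < 1 → g ((1 - s) • y s) = y s := by
  have : ∀ s : ℝ, ∃ y : Fin n → ℝ, 0 < s → s < 1 → g ((1 - s) • y) = y := by
    intro s
    by_cases hs : 0 < s ∧ s < 1
    · have hc : ContractingWith (Real.toNNReal (1 - s)) (fun x => g ((1 - s) • x)) := by
        constructor
        · rw [Real.toNNReal_lt_one]; linarith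
        · apply LipschitzWith.of_dist_le_mul
          intro x y
          have := hg.dist_le_mul ((1 - s) • x) ((1 - s) • y)
          rw [dist_smul₀, Real.norm_of_nonneg (by linarith)] at this
          rw [Real.coe_toNNReal _ (by linarith)]
          simpa using this
      exact ⟨_, fun _ _ => hc.fixedPoint_isFixedPt⟩
    · exact ⟨0, fun h1 h2 => absurd ⟨h1, h2⟩ hs⟩
  choose y hy using this
  exact ⟨y, hy⟩

lemma aux_bdd {n : ℕ} (g : (Fin n → ℝ) → (Fin n → ℝ)) (hg : LipschitzWith 1 g)
    (s : ℝ) (y : Fin n → ℝ) (h0 : 0 < s) (h1 : s < 1) (h : g ((1 - s) • y) = y) (i : Fin n) :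
    |s * y i| ≤ ‖g 0‖ := by
  have h2 := hg.dist_le_mul ((1 - s) • y) 0
  rw [h, dist_zero_right, norm_smul, Real.norm_of_nonneg (by linarith : (0:ℝ) ≤ 1 - s),
    dist_eq_norm] at h2
  have h3 : ‖y‖ ≤ ‖y - g 0‖ + ‖g 0‖ := by simpa using norm_add_le (y - g 0) (g 0)
  have h4 : |y i| ≤ ‖y‖ := norm_le_pi_norm y i
  rw [abs_mul, abs_of_pos h0]
  simp at h2
  nlinarith

lemma aux_W {n : ℕ} (g : (Fin n → ℝ) → (Fin n → ℝ)) (hg : LipschitzWith 1 g)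
    (hp : ∀ i, IsPolyhedralFun (fun x => g x i))
    (y : ℝ → (Fin n → ℝ)) (hy : ∀ s, 0 < s → s < 1 → g ((1 - s) • y s) = y s) :
    ∃ W : ℝ → (Fin n → ℝ), ContDiffAt ℝ 1 W 0 ∧ (fun s => s • y s) =ᶠ[𝓝[>] (0:ℝ)] W := by
  choose m C hC hC2 using hp
  choose hC3 M c hM using hC2
  choose p a b hab using hC3
  have h01 : ∀ᶠ s in 𝓝[>] (0:ℝ), 0 < s ∧ s < 1 := Ioo_mem_nhdsGT one_pos
  -- choose a piece
  have hex : ∃ k : ∀ i, Fin (m i), ∃ᶠ s in 𝓝[>] (0:ℝ), ∀ i, (1 - s) • y s ∈ C i (k i) := by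
    by_contra hcon
    push Not at hcon
    have hall := eventually_all.2 hcon
    obtain ⟨s, hs⟩ := hall.exists
    have : ∀ i, ∃ k, (1 - s) • y s ∈ C i k := by
      intro i
      have : (1 - s) • y s ∈ ⋃ k, C i k := by rw [hC]; trivial
      simpa using this
    choose k hk using this
    obtain ⟨i, hi⟩ := hs k
    exact hi (hk i)
  obtain ⟨k, hk⟩ := hex
  let A : Matrix (Fin n) (Fin n) ℝ := fun i j => M i (k i) j
  let e : Fin n → ℝ := fun i => c i (k i)
  let B : Matrix (Fin n) (Fin n) (Polynomial ℝ) :=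
    1 - (1 - Polynomial.X : Polynomial ℝ) • A.map Polynomial.C
  let D : Polynomial ℝ := B.det
  let N : Fin n → Polynomial ℝ := B.adjugate.mulVec (fun i => Polynomial.C (e i))
  have hBs : ∀ s : ℝ, (Polynomial.evalRingHom s).mapMatrix B = 1 - (1 - s) • A := by
    intro s
    ext i j
    simp only [B, RingHom.mapMatrix_apply, Matrix.map_apply, Matrix.sub_apply, Matrix.smul_apply,
      map_sub, smul_eq_mul, map_mul, Matrix.one_apply]
    split_ifs <;> simp
  have hDs : ∀ s : ℝ, D.eval s = (1 - (1 - s) • A).det := by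
    intro s
    have := RingHom.map_det (Polynomial.evalRingHom s) B
    rw [hBs] at this
    simpa using this
  have hNs : ∀ s : ℝ, (fun i => (N i).eval s) = (1 - (1 - s) • A).adjugate.mulVec e := by
    intro s
    have h1 := RingHom.map_adjugate (Polynomial.evalRingHom s) B
    rw [hBs] at h1
    rw [← h1]
    ext i
    simp [N, Matrix.mulVec, dotProduct, Polynomial.eval_finsetSum]
  have hD0 : D ≠ 0 := by
    intro h
    have := hDs 1
    simp [h] at this
  have hDne := aux_ne D hD0
  -- if the point is in the piece then y is rational
  have hsol : ∀ s, 0 < s → s < 1 → (∀ i, (1 - s) • y s ∈ C i (k i)) →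
      ∀ i, D.eval s * y s i = (N i).eval s := by
    intro s h0 h1 hs i
    have hlin : (1 - (1 - s) • A).mulVec (y s) = e := by
      ext i
      have h2 := hM i (k i) _ (hs i)
      simp only [hy s h0 h1] at h2
      rw [Matrix.sub_mulVec, Matrix.one_mulVec, Matrix.smul_mulVec]
      simp only [Pi.sub_apply, Pi.smul_apply, smul_eq_mul, Matrix.mulVec, dotProduct, A, e]
      rw [h2, Finset.mul_sum]
      have : ∀ j, M i (k i) j * ((1 - s) • y s) j = (1 - s) * (M i (k i) j * y s j) := by
        intro j; simp; ring
      simp only [this]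
      ring
    have h3 := congrFun (hNs s) i
    rw [h3, ← hlin, Matrix.mulVec_mulVec, Matrix.adjugate_mul, ← hDs, Matrix.smul_mulVec,
      Matrix.one_mulVec]
    simp
  -- conversely, the candidate rational point is in the piece eventually
  let Q : ∀ i, Fin (p i (k i)) → Polynomial ℝ := fun i l =>
    (∑ j, Polynomial.C (a i (k i) l j) * ((1 - Polynomial.X) * N j * D))
      - Polynomial.C (b i (k i) l) * D ^ 2
  have hQs : ∀ s i l (z : Fin n → ℝ), (∀ j, D.eval s * z j = (N j).eval s) →
      (Q i l).eval s
        = (D.eval s) ^ 2 * ((∑ j, a i (k i) l j * ((1 - s) • z) j) - b i (k i) l) := by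
    intro s i l z hz
    simp only [Q, Polynomial.eval_sub, Polynomial.eval_finsetSum, Polynomial.eval_mul,
      Polynomial.eval_C, Polynomial.eval_one, Polynomial.eval_X, Polynomial.eval_pow, ← hz]
    rw [mul_sub, Finset.mul_sum]
    congr 1
    · apply Finset.sum_congr rfl
      intro j _
      simp; ring
    · ring
  have hQev : ∀ i l, ∀ᶠ s in 𝓝[>] (0:ℝ), (Q i l).eval s ≤ 0 := by
    intro i l
    rcases aux_sign (Q i l) with h | h
    · exact h
    · exfalso
      obtain ⟨s, hs, h01s, hD, hn⟩ := (hk.and_eventually (h01.and (hDne.and h))).exists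
      apply hn
      rw [hQs s i l (y s) (hsol s h01s.1 h01s.2 hs)]
      have := hs i
      rw [hab] at this
      have := this l
      apply mul_nonpos_of_nonneg_of_nonpos (by positivity)
      linarith
  have hQall : ∀ᶠ s in 𝓝[>] (0:ℝ), ∀ i l, (Q i l).eval s ≤ 0 :=
    eventually_all.2 fun i => eventually_all.2 fun l => hQev i l
  have hyD : ∀ᶠ s in 𝓝[>] (0:ℝ), ∀ i, D.eval s * y s i = (N i).eval s := by
    filter_upwards [hQall, h01, hDne] with s hs h01s hD
    -- the candidate
    let z : Fin n → ℝ := fun j => (N j).eval s / D.eval s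
    have hz : ∀ j, D.eval s * z j = (N j).eval s := fun j => mul_div_cancel₀ _ hD
    have hmem : ∀ i, (1 - s) • z ∈ C i (k i) := by
      intro i
      rw [hab]
      intro l
      have := hs i l
      rw [hQs s i l z hz] at this
      have hD2 : 0 < (D.eval s) ^ 2 := by positivity
      by_contra hcon
      push Not at hcon
      nlinarith [mul_pos hD2 (sub_pos.2 hcon)]
    have hlin : (1 - (1 - s) • A).mulVec z = e := by
      have hz2 : z = (D.eval s)⁻¹ • (1 - (1 - s) • A).adjugate.mulVec e := by
        rw [← hNs]; ext j; simp [z, div_eq_inv_mul]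
      rw [hz2, Matrix.mulVec_smul, Matrix.mulVec_mulVec, Matrix.mul_adjugate, ← hDs,
        Matrix.smul_mulVec, Matrix.one_mulVec, smul_smul, inv_mul_cancel₀ hD, one_smul]
    have hfix : g ((1 - s) • z) = z := by
      ext i
      have h2 := hM i (k i) _ (hmem i)
      have h3 := congrFun hlin i
      rw [Matrix.sub_mulVec, Matrix.one_mulVec, Matrix.smul_mulVec] at h3
      simp only [Pi.sub_apply, Pi.smul_apply, smul_eq_mul, Matrix.mulVec, dotProduct, A, e] at h3
      simp only at h2
      rw [h2, ← h3]
      have : ∀ j, M i (k i) j * ((1 - s) • z) j = (1 - s) * (M i (k i) j * z j) := by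
        intro j; simp; ring
      simp only [this, ← Finset.mul_sum]
      ring
    have huniq : y s = z := by
      have h5 := hg.dist_le_mul ((1 - s) • y s) ((1 - s) • z)
      rw [hy s h01s.1 h01s.2, hfix, dist_smul₀, Real.norm_of_nonneg (by linarith [h01s.2])] at h5
      simp only [NNReal.coe_one, one_mul] at h5
      have : dist (y s) z ≤ 0 := by
        have := dist_nonneg (x := y s) (y := z)
        nlinarith [h01s.1]
      exact dist_le_zero.1 this
    rw [huniq]
    exact hz
  have hfin : ∀ i, ∃ W : ℝ → ℝ, ContDiffAt ℝ 1 W 0 ∧ (fun s => s * y s i) =ᶠ[𝓝[>] (0:ℝ)] W := by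
    intro i
    refine aux_smooth (fun s => s * y s i) ‖g 0‖ ?_ D.natDegree D (Polynomial.X * N i) le_rfl hD0 ?_
    · filter_upwards [h01] with s hs
      exact aux_bdd g hg s (y s) hs.1 hs.2 (hy s hs.1 hs.2) i
    · filter_upwards [hyD] with s hs
      simp only [Polynomial.eval_mul, Polynomial.eval_X, ← hs]
      ring
  choose W hW1 hW2 using hfin
  refine ⟨fun s i => W i s, contDiffAt_pi.2 hW1, ?_⟩
  filter_upwards [eventually_all.2 hW2] with s hs
  ext i
  exact hs i

lemma aux_iter {n : ℕ} (g : (Fin n → ℝ) → (Fin n → ℝ)) (hg : LipschitzWith 1 g)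
    (x : ℕ → Fin n → ℝ) (k : ℕ) :
    ‖g^[k] (x 0) - x k‖ ≤ ∑ j ∈ Finset.range k, ‖g (x j) - x (j + 1)‖ := by
  induction k with
  | zero => simp
  | succ k ih =>
    rw [Function.iterate_succ_apply', Finset.sum_range_succ]
    have h1 := hg.dist_le_mul (g^[k] (x 0)) (x k)
    simp only [NNReal.coe_one, one_mul, dist_eq_norm] at h1
    calc ‖g (g^[k] (x 0)) - x (k + 1)‖
        = ‖(g (g^[k] (x 0)) - g (x k)) + (g (x k) - x (k + 1))‖ := by congr 1; abel
      _ ≤ _ := norm_add_le _ _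
      _ ≤ _ := by gcongr; exact h1.trans ih

lemma aux_exists {n : ℕ} (g : (Fin n → ℝ) → (Fin n → ℝ)) (hg : LipschitzWith 1 g)
    (hp : ∀ i, IsPolyhedralFun (fun x => g x i)) :
    ∃ χ y : Fin n → ℝ, Tendsto (fun k : ℕ => (k : ℝ)⁻¹ • g^[k] y) atTop (𝓝 χ) := by
  obtain ⟨y, hy⟩ := aux_fix g hg
  obtain ⟨W, hW, hyW⟩ := aux_W g hg hp y hy
  obtain ⟨K, t, ht, hK⟩ := hW.exists_lipschitzOnWith
  have hev : ∀ᶠ s in 𝓝[>] (0:ℝ), (s • y s = W s ∧ s ∈ t) ∧ (0 < s ∧ s < 1) :=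
    (hyW.and (nhdsWithin_le_nhds ht)).and (Ioo_mem_nhdsGT one_pos)
  have hseq : Tendsto (fun k : ℕ => 1 / ((k : ℝ) + 1)) atTop (𝓝[>] 0) := by
    apply tendsto_nhdsWithin_iff.2
    refine ⟨tendsto_one_div_add_atTop_nhds_zero_nat, Eventually.of_forall fun k => ?_⟩
    simp only [Set.mem_Ioi]; positivity
  obtain ⟨J, hJ⟩ := eventually_atTop.1 (hseq.eventually hev)
  let s : ℕ → ℝ := fun k => 1 / (((J + k : ℕ) : ℝ) + 1)
  have hs : ∀ k, (s k • y (s k) = W (s k) ∧ s k ∈ t) ∧ (0 < s k ∧ s k < 1) :=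
    fun k => hJ (J + k) (by omega)
  let x : ℕ → Fin n → ℝ := fun k => y (s k)
  have hxW : ∀ k, x k = (((J + k : ℕ) : ℝ) + 1) • W (s k) := by
    intro k
    rw [← (hs k).1.1, smul_smul]
    have : (((J + k : ℕ) : ℝ) + 1) * s k = 1 := by
      simp only [s]; field_simp
    rw [this, one_smul]
  have hstep : ∀ j, ‖g (x j) - x (j + 1)‖ ≤ K * (1 / (((J + j : ℕ) : ℝ) + 2)) := by
    intro j
    have h1 : g ((1 - s (j + 1)) • x (j + 1)) = x (j + 1) := hy _ (hs (j+1)).2.1 (hs (j+1)).2.2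
    have h2 := hg.dist_le_mul (x j) ((1 - s (j + 1)) • x (j + 1))
    rw [h1] at h2
    simp only [NNReal.coe_one, one_mul, dist_eq_norm] at h2
    refine h2.trans ?_
    have h3 : (1 - s (j + 1)) • x (j + 1) = (((J + j : ℕ) : ℝ) + 1) • W (s (j + 1)) := by
      rw [hxW (j + 1), smul_smul]
      congr 1
      simp only [s]; push_cast; field_simp; ring
    rw [h3, hxW j, ← smul_sub, norm_smul, Real.norm_of_nonneg (by positivity)]
    have h4 := hK.dist_le_mul _ (hs j).1.2 _ (hs (j + 1)).1.2
    rw [dist_eq_norm, Real.dist_eq] at h4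
    have h5 : |s j - s (j + 1)| = 1 / ((((J + j : ℕ) : ℝ) + 1) * (((J + j : ℕ) : ℝ) + 2)) := by
      have : s j - s (j + 1) = 1 / ((((J + j : ℕ) : ℝ) + 1) * (((J + j : ℕ) : ℝ) + 2)) := by
        simp only [s]; push_cast; field_simp; ring
      rw [this, abs_of_nonneg (by positivity)]
    rw [h5] at h4
    calc (((J + j : ℕ) : ℝ) + 1) * ‖W (s j) - W (s (j + 1))‖
        ≤ (((J + j : ℕ) : ℝ) + 1) *
          (K * (1 / ((((J + j : ℕ) : ℝ) + 1) * (((J + j : ℕ) : ℝ) + 2)))) := by gcongr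
      _ = _ := by field_simp
  have hces : Tendsto (fun k : ℕ => (k : ℝ)⁻¹ *
      ∑ j ∈ Finset.range k, K * (1 / (((J + j : ℕ) : ℝ) + 2))) atTop (𝓝 0) := by
    apply Tendsto.cesaro
    have h1 : Tendsto (fun j : ℕ => ((J + j : ℕ) : ℝ) + 2) atTop atTop := by
      apply tendsto_atTop_add_const_right
      exact tendsto_natCast_atTop_atTop.comp (tendsto_atTop_mono (fun j => by omega : ∀ j : ℕ, j ≤ J + j) tendsto_id)
    have h2 := (h1.inv_tendsto_atTop).const_mul (K : ℝ)
    simpa using h2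
  have hdiff : Tendsto (fun k : ℕ => (k : ℝ)⁻¹ • (g^[k] (x 0) - x k)) atTop (𝓝 0) := by
    refine squeeze_zero_norm (fun k => ?_) hces
    rw [norm_smul, Real.norm_of_nonneg (by positivity)]
    gcongr
    exact (aux_iter g hg x k).trans (Finset.sum_le_sum fun j _ => hstep j)
  have hs0 : Tendsto s atTop (𝓝 0) := by
    have h1 := tendsto_one_div_add_atTop_nhds_zero_nat (𝕜 := ℝ)
    exact h1.comp (tendsto_atTop_mono (fun j => by omega : ∀ j : ℕ, j ≤ J + j) tendsto_id)
  have hWl : Tendsto (fun k => W (s k)) atTop (𝓝 (W 0)) := hW.continuousAt.tendsto.comp hs0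
  have hcoef : Tendsto (fun k : ℕ => (k : ℝ)⁻¹ * (((J + k : ℕ) : ℝ) + 1)) atTop (𝓝 1) := by
    have h1 : Tendsto (fun k : ℕ => 1 + (k : ℝ)⁻¹ * ((J : ℝ) + 1)) atTop (𝓝 1) := by
      simpa using (tendsto_inv_atTop_nhds_zero_nat (𝕜 := ℝ)).mul_const ((J : ℝ) + 1)
        |>.const_add 1
    refine h1.congr' ?_
    filter_upwards [eventually_gt_atTop 0] with k hk
    have : (k : ℝ) ≠ 0 := by positivity
    push_cast; field_simp; ring
  refine ⟨W 0, x 0, ?_⟩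
  have h := hdiff.add (hcoef.smul hWl)
  rw [zero_add, one_smul] at h
  refine h.congr fun k => ?_
  rw [← smul_smul, ← hxW, ← smul_add, sub_add_cancel]

lemma aux_indep {n : ℕ} (g : (Fin n → ℝ) → (Fin n → ℝ)) (hg : LipschitzWith 1 g)
    (χ y : Fin n → ℝ) (h : Tendsto (fun k : ℕ => (k : ℝ)⁻¹ • g^[k] y) atTop (𝓝 χ))
    (z : Fin n → ℝ) : Tendsto (fun k : ℕ => fun i => g^[k] z i / k) atTop (𝓝 χ) := by
  have hd : Tendsto (fun k : ℕ => (k : ℝ)⁻¹ • (g^[k] z - g^[k] y)) atTop (𝓝 0) := by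
    have h1 : Tendsto (fun k : ℕ => (k : ℝ)⁻¹ * dist z y) atTop (𝓝 0) := by
      simpa using (tendsto_inv_atTop_nhds_zero_nat (𝕜 := ℝ)).mul_const (dist z y)
    refine squeeze_zero_norm (fun k => ?_) h1
    rw [norm_smul, Real.norm_of_nonneg (by positivity), ← dist_eq_norm]
    gcongr
    simpa using (hg.iterate k).dist_le_mul z y
  have := hd.add h
  rw [zero_add] at this
  refine this.congr fun k => ?_
  ext i
  simp
  ring

lemma aux_lip {n : ℕ} (g : (Fin n → ℝ) → (Fin n → ℝ))
    (hmono : ∀ x y : Fin n → ℝ, x ≤ y → g x ≤ g y)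
    (hadd : ∀ (lam : ℝ) (x : Fin n → ℝ) i, g (fun j => lam + x j) i = lam + g x i) :
    LipschitzWith 1 g := by
  have key : ∀ x y : Fin n → ℝ, ∀ i, g x i ≤ dist x y + g y i := by
    intro x y i
    rw [← hadd]
    refine hmono x _ (fun j => ?_) i
    have := dist_le_pi_dist x y j
    rw [Real.dist_eq] at this
    linarith [le_abs_self (x j - y j)]
  apply LipschitzWith.of_dist_le_mul
  intro x y
  simp only [NNReal.coe_one, one_mul]
  refine (dist_pi_le_iff dist_nonneg).2 fun i => ?_
  rw [Real.dist_eq, abs_le]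
  have h1 := key x y i
  have h2 := key y x i
  rw [dist_comm] at h2
  constructor <;> linarith

lemma aux_line (T : ℝ) {n : ℕ} (η v : Fin n → ℝ) :
    Tendsto (fun k : ℕ => (k : ℝ)⁻¹ • (fun j => (T + k) * η j + v j : Fin n → ℝ)) atTop (𝓝 η) := by
  have h1 : Tendsto (fun k : ℕ => η + (k : ℝ)⁻¹ • (T • η + v)) atTop (𝓝 η) := by
    simpa using ((tendsto_inv_atTop_nhds_zero_nat (𝕜 := ℝ)).smul_const (T • η + v)).const_add η
  refine h1.congr' ?_
  filter_upwards [eventually_gt_atTop 0] with k hk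
  have : (k : ℝ) ≠ 0 := by positivity
  ext j
  simp
  field_simp
  ring

/-- Let `A i` be finite nonempty action sets, `f^a_i : ℝⁿ → ℝ`
polyhedral, order-preserving, additively homogeneous, convex maps; let
`f_i(x) = min_{a ∈ A i} f^a_i(x)` and, for strategies `σ, σ'`, `f^{(σ)}_i = f^{σ(i)}_i`.
If `t ↦ tη + v` is an invariant half-line of `f^{(σ)}` and `f^{(σ')}(tη+v) = f(tη+v)` for
all sufficiently large `t`, then the cycle times of `f^{(σ)}` and `f^{(σ')}` exist and
satisfy `χ(f^{(σ')}) ≤ χ(f^{(σ)}) = η`. -/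
theorem improved_policy_cycleTime_le
    (n : ℕ) (A : Fin n → Type) [∀ i, Fintype (A i)] [∀ i, Nonempty (A i)]
    (fa : ∀ i : Fin n, A i → (Fin n → ℝ) → ℝ)
    (hpoly : ∀ i a, IsPolyhedralFun (fa i a))
    (hop : ∀ i a, ∀ x y : Fin n → ℝ, x ≤ y → fa i a x ≤ fa i a y)
    (hah : ∀ i a (lam : ℝ) (x : Fin n → ℝ), fa i a (fun j => lam + x j) = lam + fa i a x)
    (hconv : ∀ i a, ConvexOn ℝ Set.univ (fa i a))
    (σ σ' : ∀ i, A i)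
    (fσ fσ' : (Fin n → ℝ) → (Fin n → ℝ))
    (hfσ : ∀ (w : Fin n → ℝ) (i : Fin n), fσ w i = fa i (σ i) w)
    (hfσ' : ∀ (w : Fin n → ℝ) (i : Fin n), fσ' w i = fa i (σ' i) w)
    (η v : Fin n → ℝ)
    -- `t ↦ tη + v` is an invariant half-line of `f^{(σ)}`
    (hinv : ∃ T : ℝ, ∀ t ≥ T,
      fσ (fun j => t * η j + v j) = fun i => (t + 1) * η i + v i)
    -- `f^{(σ')}(tη + v) = f(tη + v)` for all sufficiently large `t`
    (hsel : ∃ T : ℝ, ∀ t ≥ T, ∀ i : Fin n,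
      fσ' (fun j => t * η j + v j) i
        = ⨅ a : A i, fa i a (fun j => t * η j + v j)) :
    ∃ χ' : Fin n → ℝ,
      (∀ y : Fin n → ℝ,
        Tendsto (fun k : ℕ => fun i => fσ'^[k] y i / k) atTop (𝓝 χ')) ∧
      χ' ≤ η ∧
      (∀ y : Fin n → ℝ,
        Tendsto (fun k : ℕ => fun i => fσ^[k] y i / k) atTop (𝓝 η)) := by
  have hL : LipschitzWith 1 fσ := aux_lip fσ
    (fun x y h i => by rw [hfσ, hfσ]; exact hop _ _ _ _ h)
    (fun l x i => by rw [hfσ, hfσ]; exact hah _ _ _ _)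
  have hm' : ∀ x y : Fin n → ℝ, x ≤ y → fσ' x ≤ fσ' y :=
    fun x y h i => by rw [hfσ', hfσ']; exact hop _ _ _ _ h
  have hL' : LipschitzWith 1 fσ' := aux_lip fσ' hm'
    (fun l x i => by rw [hfσ', hfσ']; exact hah _ _ _ _)
  obtain ⟨χ, y, hχ⟩ := aux_exists fσ' hL' (fun i => by
    have : (fun x => fσ' x i) = fa i (σ' i) := by ext x; exact hfσ' x i
    rw [this]; exact hpoly _ _)
  obtain ⟨T1, hT1⟩ := hinv
  obtain ⟨T2, hT2⟩ := hsel
  let T := max T1 T2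
  let z : ℕ → Fin n → ℝ := fun k j => (T + k) * η j + v j
  have hk0 : ∀ k : ℕ, T ≤ T + k := fun k => by simp
  have hz : ∀ k, fσ (z k) = z (k + 1) := by
    intro k
    have := hT1 (T + k) ((le_max_left _ _).trans (hk0 k))
    simp only [z]
    rw [this]; ext i; push_cast; ring
  have hz' : ∀ k, fσ' (z k) ≤ z (k + 1) := by
    intro k i
    have := hT2 (T + k) ((le_max_right _ _).trans (hk0 k)) i
    rw [← hz, hfσ]
    refine this.le.trans ?_
    exact ciInf_le (Set.finite_range _).bddBelow (σ i)
  have hit : ∀ k : ℕ, fσ^[k] (z 0) = z k := by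
    intro k
    induction k with
    | zero => rfl
    | succ k ih => rw [Function.iterate_succ_apply', ih, hz]
  have hit' : ∀ k : ℕ, fσ'^[k] (z 0) ≤ z k := by
    intro k
    induction k with
    | zero => exact le_rfl
    | succ k ih =>
      rw [Function.iterate_succ_apply']
      exact (hm' _ _ ih).trans (hz' k)
  have hlim := aux_line T η v
  refine ⟨χ, aux_indep fσ' hL' χ y hχ, ?_, aux_indep fσ hL η (z 0) ?_⟩
  · refine le_of_tendsto_of_tendsto' (aux_indep fσ' hL' χ y hχ (z 0)) hlim fun k i => ?_
    simp only [Pi.smul_apply, smul_eq_mul]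
    rw [div_eq_inv_mul]
    gcongr
    exact hit' k i
  · refine hlim.congr fun k => ?_
    rw [hit k]
end

section
/- Let ḡ, h̄ : ℝⁿ → ℝⁿ be polyhedral, convex, order-preserving and additively homogeneous maps; let w be a fixed point of ḡ and u a fixed point of h̄. Suppose that w_i = u_i and that the coordinate functions satisfy ḡ_i = h̄_i (as functions ℝⁿ → ℝ) for every critical node i of ḡ. Then every critical node of ḡ is a critical node of h̄. -/
open Filter Topology

/-- The subdifferential of a (convex) self-map `g` of `ℝⁿ` at `u`: the set of matrices `M`
such that `g(x) − g(u) ≥ M(x − u)` componentwise for all `x`. -/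
def Subdiff {n : ℕ} (g : (Fin n → ℝ) → (Fin n → ℝ)) (u : Fin n → ℝ) :
    Set (Matrix (Fin n) (Fin n) ℝ) :=
  {M | ∀ (x : Fin n → ℝ) (i : Fin n), g u i + M.mulVec (x - u) i ≤ g x i}

/-- `F` is a recurrence class of the matrix `M`: a (strongly connected, arc-closed)
strongly connected component of the digraph with an arc `(i,j)` whenever `M i j > 0`,
such that every row of the `F×F` submatrix of `M` sums to `1`. -/
def IsRecClass {n : ℕ} (M : Matrix (Fin n) (Fin n) ℝ) (F : Finset (Fin n)) : Prop :=
  F.Nonempty ∧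
  (∀ i ∈ F, ∀ j ∈ F, Relation.ReflTransGen (fun a b => 0 < M a b) i j) ∧
  (∀ i ∈ F, ∀ j, 0 < M i j → j ∈ F) ∧
  (∀ i ∈ F, ∑ j ∈ F, M i j = 1)

/-- `i` is a critical node of `g`: `i` belongs to a recurrence class of some matrix in the
subdifferential of `g` at some harmonic vector of `g` (this does not depend on the choice
of the harmonic vector). -/
def IsCritical {n : ℕ} (g : (Fin n → ℝ) → (Fin n → ℝ)) (i : Fin n) : Prop :=
  ∃ u₀ : Fin n → ℝ, g u₀ = u₀ ∧
    ∃ M ∈ Subdiff g u₀, ∃ F : Finset (Fin n), IsRecClass M F ∧ i ∈ F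


/-- `g : ℝⁿ → ℝⁿ` is polyhedral: there is a covering of `ℝⁿ` by finitely many convex
polyhedra (finite intersections of half-spaces) on each of which `g` is affine. -/
def IsPolyhedralMap {n : ℕ} (g : (Fin n → ℝ) → (Fin n → ℝ)) : Prop :=
  ∃ (m : ℕ) (C : Fin m → Set (Fin n → ℝ)),
    (⋃ k, C k) = Set.univ ∧
    ∀ k : Fin m,
      (∃ (p : ℕ) (a : Fin p → Fin n → ℝ) (b : Fin p → ℝ),
        C k = {x | ∀ l, ∑ j, a l j * x j ≤ b l}) ∧
      ∃ (A : Matrix (Fin n) (Fin n) ℝ) (c : Fin n → ℝ),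
        ∀ x ∈ C k, g x = fun i => (∑ j, A i j * x j) + c i


lemma exists_subgrad {n : ℕ} (f : (Fin n → ℝ) → ℝ) (hf : ConvexOn ℝ Set.univ f)
    (u : Fin n → ℝ) :
    ∃ m : Fin n → ℝ, ∀ x, f u + ∑ j, m j * (x j - u j) ≤ f x := by
  have hc : Continuous f := hf.locallyLipschitz.continuous
  have hopen : IsOpen {p : (Fin n → ℝ) × ℝ | p.1 ∈ Set.univ ∧ f p.1 < p.2} := by
    simp only [Set.mem_univ, true_and]
    exact isOpen_lt (hc.comp continuous_fst) continuous_snd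
  obtain ⟨L, hL⟩ := geometric_hahn_banach_point_open (x := (u, f u))
    hf.convex_strict_epigraph hopen (by simp)
  have hsplit : ∀ (x : Fin n → ℝ) (t : ℝ),
      L (x, t) = ∑ j, x j * L (Pi.single j 1, 0) + t * L (0, 1) := by
    intro x t
    have h1 : (x, t) = ∑ j, x j • ((Pi.single j 1, 0) : (Fin n → ℝ) × ℝ)
        + t • ((0, 1) : (Fin n → ℝ) × ℝ) := by
      ext k
      · simp [Prod.fst_sum, Finset.sum_apply, Pi.single_apply]
      · simp [Prod.snd_sum]
    conv_lhs => rw [h1]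
    simp only [map_add, map_sum, map_smul, smul_eq_mul]
  set a := L (0, 1) with ha
  have hapos : 0 < a := by
    have := hL (u, f u + 1) (by simp)
    rw [hsplit, hsplit] at this
    linarith
  refine ⟨fun j => - L (Pi.single j 1, 0) / a, fun x => ?_⟩
  have hkey : ∑ j, (u j - x j) * L (Pi.single j 1, 0) ≤ a * (f x - f u) := by
    refine le_of_forall_pos_le_add fun ε hε => ?_
    have := hL (x, f x + ε / a) (by simp; positivity)
    rw [hsplit, hsplit, add_mul, div_mul_cancel₀ _ hapos.ne'] at this
    simp only [sub_mul, Finset.sum_sub_distrib]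
    linarith
  have h2 : ∑ j, - L (Pi.single j 1, 0) / a * (x j - u j)
      = (∑ j, (u j - x j) * L (Pi.single j 1, 0)) / a := by
    rw [Finset.sum_div]
    refine Finset.sum_congr rfl fun j _ => ?_
    ring
  have h3 : (∑ j, (u j - x j) * L (Pi.single j 1, 0)) / a ≤ f x - f u := by
    rw [div_le_iff₀ hapos]; linarith
  linarith [h2, h3]

lemma subdiff_nonneg {n : ℕ} {g : (Fin n → ℝ) → (Fin n → ℝ)}
    (hop : ∀ x y : Fin n → ℝ, x ≤ y → g x ≤ g y) {u : Fin n → ℝ}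
    {M : Matrix (Fin n) (Fin n) ℝ} (hM : M ∈ Subdiff g u) (i j : Fin n) : 0 ≤ M i j := by
  have h1 := hM (u - Pi.single j 1) i
  have h2 := hop (u - Pi.single j 1) u (by simp) i
  have h3 : M.mulVec (u - Pi.single j 1 - u) i = - M i j := by
    rw [show u - Pi.single j 1 - u = - (Pi.single j 1) by abel, Matrix.mulVec_neg]
    simp
  linarith

lemma const_on_class {n : ℕ} {M : Matrix (Fin n) (Fin n) ℝ} {F : Finset (Fin n)}
    (hF : IsRecClass M F) (hM : ∀ i j, 0 ≤ M i j) (d : Fin n → ℝ)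
    (hd : ∀ i ∈ F, ∑ j ∈ F, M i j * d j ≤ d i) : ∃ c, ∀ i ∈ F, d i = c := by
  obtain ⟨hne, hconn, hcl, hsum⟩ := hF
  obtain ⟨i0, hi0, hmin⟩ := F.exists_min_image d hne
  refine ⟨d i0, fun i hi => ?_⟩
  suffices h : i ∈ F ∧ d i = d i0 from h.2
  have hpath := hconn i0 hi0 i hi
  clear hi
  induction hpath with
  | refl => exact ⟨hi0, rfl⟩
  | @tail a b _ hab ih =>
    obtain ⟨haF, hda⟩ := ih
    have hb := hcl a haF b hab
    refine ⟨hb, ?_⟩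
    have hnn : ∀ j ∈ F, 0 ≤ M a j * (d j - d i0) := fun j hj =>
      mul_nonneg (hM a j) (by linarith [hmin j hj])
    have hle : ∑ j ∈ F, M a j * (d j - d i0) ≤ 0 := by
      simp only [mul_sub, Finset.sum_sub_distrib, ← Finset.sum_mul, hsum a haF]
      linarith [hd a haF]
    have h0 := (Finset.sum_eq_zero_iff_of_nonneg hnn).1
      (le_antisymm hle (Finset.sum_nonneg hnn)) b hb
    rcases mul_eq_zero.1 h0 with h | h
    · exact absurd h hab.ne'
    · linarith

/-- Let `ḡ, h̄ : ℝⁿ → ℝⁿ` be polyhedral, convex, order-preserving and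
additively homogeneous, let `w` be a fixed point of `ḡ` and `u` a fixed point of `h̄`.
If `wᵢ = uᵢ` and `ḡᵢ = h̄ᵢ` (as functions) for every critical node `i` of `ḡ`, then every
critical node of `ḡ` is a critical node of `h̄`. -/
theorem critical_nodes_decrease
    (n : ℕ) (gbar hbar : (Fin n → ℝ) → (Fin n → ℝ))
    (hgpoly : IsPolyhedralMap gbar) (hhpoly : IsPolyhedralMap hbar)
    (hgconv : ∀ i, ConvexOn ℝ Set.univ (fun x => gbar x i))
    (hhconv : ∀ i, ConvexOn ℝ Set.univ (fun x => hbar x i))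
    (hgop : ∀ x y : Fin n → ℝ, x ≤ y → gbar x ≤ gbar y)
    (hhop : ∀ x y : Fin n → ℝ, x ≤ y → hbar x ≤ hbar y)
    (hgah : ∀ (lam : ℝ) (x : Fin n → ℝ),
      gbar (fun i => lam + x i) = fun i => lam + gbar x i)
    (hhah : ∀ (lam : ℝ) (x : Fin n → ℝ),
      hbar (fun i => lam + x i) = fun i => lam + hbar x i)
    (w u : Fin n → ℝ) (hw : gbar w = w) (hu : hbar u = u)
    (hcoin : ∀ i : Fin n, IsCritical gbar i → w i = u i)
    (hcoord : ∀ i : Fin n, IsCritical gbar i → ∀ x : Fin n → ℝ, gbar x i = hbar x i) :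
    ∀ i : Fin n, IsCritical gbar i → IsCritical hbar i := by
  rintro i ⟨u₀, hu₀, M, hM, F, hF, hiF⟩
  have hcrit : ∀ k ∈ F, IsCritical gbar k := fun k hk => ⟨u₀, hu₀, M, hM, F, hF, hk⟩
  have hnn := subdiff_nonneg hgop hM
  have hoff : ∀ k ∈ F, ∀ j, j ∉ F → M k j = 0 := fun k hk j hj =>
    le_antisymm (not_lt.1 fun h => hj (hF.2.2.1 k hk j h)) (hnn k j)
  have hmv : ∀ k ∈ F, ∀ v : Fin n → ℝ, M.mulVec v k = ∑ j ∈ F, M k j * v j := by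
    intro k hk v
    rw [Matrix.mulVec, dotProduct]
    refine (Finset.sum_subset (Finset.subset_univ F) fun j _ hj => ?_).symm
    rw [hoff k hk j hj, zero_mul]
  obtain ⟨c, hc⟩ := const_on_class hF hnn (w - u₀) (fun k hk => by
    have := hM w k
    rw [hmv k hk, hu₀, hw] at this
    rw [Pi.sub_apply]
    linarith)
  choose m hm using fun k => exists_subgrad (fun x => hbar x k) (hhconv k) u
  classical
  let N : Matrix (Fin n) (Fin n) ℝ := fun k j => if k ∈ F then M k j else m k j
  have hN : ∀ k ∈ F, ∀ j, N k j = M k j := fun k hk j => by simp [N, hk]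
  refine ⟨u, hu, N, ?_, F, ⟨hF.1, ?_, ?_, ?_⟩, hiF⟩
  · intro x k
    by_cases hk : k ∈ F
    · have h1 : N.mulVec (x - u) k = M.mulVec (x - u) k := by
        simp only [Matrix.mulVec, dotProduct, hN k hk]
      have h2 := hM x k
      rw [hu₀, hcoord k (hcrit k hk)] at h2
      have h3 : M.mulVec (x - u₀) k = M.mulVec (x - u) k + c := by
        rw [hmv k hk, hmv k hk]
        have : c = ∑ j ∈ F, M k j * c := by rw [← Finset.sum_mul, hF.2.2.2 k hk, one_mul]
        rw [this, ← Finset.sum_add_distrib]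
        refine Finset.sum_congr rfl fun j hj => ?_
        have e1 := hc j hj
        have e2 := hcoin j (hcrit j hj)
        simp only [Pi.sub_apply] at e1 ⊢
        rw [← e2, ← e1]; ring
      have e1 := hc k hk
      have e2 := hcoin k (hcrit k hk)
      simp only [Pi.sub_apply] at e1
      rw [h1, hu]
      linarith
    · have := hm k x
      simpa [Matrix.mulVec, dotProduct, N, hk] using this
  · intro a ha b hb
    have hpath := hF.2.1 a ha b hb
    clear hb
    suffices h : b ∈ F ∧ Relation.ReflTransGen (fun a b => 0 < N a b) a b from h.2
    induction hpath with
    | refl => exact ⟨ha, .refl⟩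
    | @tail p q _ hpq ih =>
      exact ⟨hF.2.2.1 p ih.1 q hpq, ih.2.tail (by rw [hN p ih.1]; exact hpq)⟩
  · intro a ha j hj
    rw [hN a ha] at hj
    exact hF.2.2.1 a ha j hj
  · intro a ha
    rw [← hF.2.2.2 a ha]
    exact Finset.sum_congr rfl fun j _ => hN a ha j
end
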